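/- arXiv:2509.01861 — 5 statements merged into one kernel-verified Lean document; each statement's English description precedes it below -/
import Mathlib

section
/- (Kolmogorov–Smirnov bound) Let G¹ and G⁰ be Borel probability measures on ℝ, with cumulative distribution functions F₁ and F₀, whose supports are contained in a closed set A ⊆ ℝ. Let h : A → ℝ be continuous and bounded, and let H denote the set of all continuous bounded functions g : ℝ → ℝ extending h (i.e. g = h on A). Then H is nonempty, and |∫_A h dG¹ − ∫_A h dG⁰| ≤ (sup_{x ∈ ℝ} |F₁(x) − F₀(x)|) · inf_{g ∈ H} V(g), where V(g) denotes the total variation of g over all of ℝ. (In the paper, with h the misspecification function f₀ − l_θ(·,0) restricted to the union of the supports, the left-hand side equals the regression bias |β − τ|.) -/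
open MeasureTheory

/-- The set of continuous bounded extensions of `h` from `A` to all of `ℝ`. -/
def ksExtensions (A : Set ℝ) (h : ℝ → ℝ) : Set (ℝ → ℝ) :=
  {g : ℝ → ℝ | Continuous g ∧ (∃ M : ℝ, ∀ x : ℝ, |g x| ≤ M) ∧ ∀ x ∈ A, g x = h x}

open Filter Topology

/-- grid points -/
noncomputable def ksGrid (n i : ℕ) : ℝ := (i : ℝ) / ((n : ℝ) + 1) - ((n : ℝ) + 1)

/-- step approximation -/
noncomputable def ksStep (g : ℝ → ℝ) (n : ℕ) (x : ℝ) : ℝ :=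
  g (ksGrid n (2 * (n + 1) ^ 2)) - ∑ i ∈ Finset.range (2 * (n + 1) ^ 2),
    (Set.Iic (ksGrid n i)).indicator (fun _ => g (ksGrid n (i + 1)) - g (ksGrid n i)) x

lemma ksGrid_mono (n : ℕ) : Monotone (ksGrid n) := by
  intro i j hij
  unfold ksGrid
  gcongr

lemma ks_telescope (a : ℕ → ℝ) (j m : ℕ) :
    ∑ i ∈ Finset.range m, (if j ≤ i then a (i + 1) - a i else 0) = a m - a (min j m) := by
  induction m with
  | zero => simp
  | succ m ih =>
    rw [Finset.sum_range_succ, ih]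
    split_ifs with hj
    · rw [min_eq_left hj, min_eq_left (by omega)]; ring
    · rw [min_eq_right (by omega), min_eq_right (by omega)]; ring

lemma ks_le_grid (n i : ℕ) (x : ℝ) :
    x ≤ ksGrid n i ↔ ⌈(x + (n + 1)) * (n + 1)⌉₊ ≤ i := by
  have hn : (0 : ℝ) < (n : ℝ) + 1 := by positivity
  rw [Nat.ceil_le, ksGrid, le_sub_iff_add_le, le_div_iff₀ hn]

lemma ksStep_eq (g : ℝ → ℝ) (n : ℕ) (x : ℝ) :
    ksStep g n x = g (ksGrid n (min ⌈(x + (n + 1)) * (n + 1)⌉₊ (2 * (n + 1) ^ 2))) := by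
  have := ks_telescope (fun i => g (ksGrid n i)) ⌈(x + (n + 1)) * (n + 1)⌉₊ (2 * (n + 1) ^ 2)
  unfold ksStep
  simp only [Set.indicator_apply, Set.mem_Iic, ks_le_grid]
  rw [this]; ring

lemma ksStep_tendsto (g : ℝ → ℝ) (hg : Continuous g) (x : ℝ) :
    Tendsto (fun n => ksStep g n x) atTop (𝓝 (g x)) := by
  simp only [ksStep_eq]
  refine (hg.tendsto x).comp ?_
  have hup : Tendsto (fun n : ℕ => x + 1 / ((n : ℝ) + 1)) atTop (𝓝 x) := by
    simpa using tendsto_const_nhds.add (tendsto_one_div_add_atTop_nhds_zero_nat (𝕜 := ℝ))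
  obtain ⟨N, hN⟩ := exists_nat_ge |x|
  have key : ∀ n ≥ N, min ⌈(x + (n + 1)) * (n + 1)⌉₊ (2 * (n + 1) ^ 2)
      = ⌈(x + ((n : ℝ) + 1)) * ((n : ℝ) + 1)⌉₊ ∧ 0 ≤ (x + ((n : ℝ) + 1)) * ((n : ℝ) + 1) := by
    intro n hn
    have h1 : (N : ℝ) ≤ n := by exact_mod_cast hn
    have h2 := abs_le.1 (hN.trans h1)
    constructor
    · apply min_eq_left
      rw [Nat.ceil_le]
      push_cast
      nlinarith
    · have : 0 ≤ x + ((n : ℝ) + 1) := by linarith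
      positivity
  refine tendsto_of_tendsto_of_tendsto_of_le_of_le' tendsto_const_nhds hup ?_ ?_
  · filter_upwards [eventually_ge_atTop N] with n hn
    rw [(key n hn).1, ks_le_grid]
  · filter_upwards [eventually_ge_atTop N] with n hn
    rw [(key n hn).1]
    have h3 := (Nat.ceil_lt_add_one (key n hn).2).le
    have hp : (0 : ℝ) < (n : ℝ) + 1 := by positivity
    unfold ksGrid
    rw [sub_le_iff_le_add, div_le_iff₀ hp]
    refine h3.trans (le_of_eq ?_)
    field_simp
    ring

lemma ksStep_integral (G : Measure ℝ) [IsProbabilityMeasure G] (g : ℝ → ℝ) (n : ℕ) :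
    ∫ x, ksStep g n x ∂G = g (ksGrid n (2 * (n + 1) ^ 2)) -
      ∑ i ∈ Finset.range (2 * (n + 1) ^ 2),
        (g (ksGrid n (i + 1)) - g (ksGrid n i)) * (G (Set.Iic (ksGrid n i))).toReal := by
  unfold ksStep
  have hi : ∀ i ∈ Finset.range (2 * (n + 1) ^ 2), Integrable
      ((Set.Iic (ksGrid n i)).indicator (fun _ => g (ksGrid n (i + 1)) - g (ksGrid n i))) G :=
    fun i _ => (integrable_const _).indicator measurableSet_Iic
  rw [integral_sub (integrable_const _) (integrable_finsetSum _ hi), integral_finsetSum _ hi]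
  simp only [integral_const, probReal_univ, one_smul]
  congr 1
  refine Finset.sum_congr rfl fun i _ => ?_
  rw [integral_indicator_const _ measurableSet_Iic, smul_eq_mul, mul_comm]
  rfl

lemma ksStep_measurable (g : ℝ → ℝ) (n : ℕ) : Measurable (ksStep g n) := by
  unfold ksStep
  refine measurable_const.sub (Finset.measurable_fun_sum _ fun i _ => ?_)
  exact measurable_const.indicator measurableSet_Iic

lemma ksStep_integral_tendsto (G : Measure ℝ) [IsProbabilityMeasure G] (g : ℝ → ℝ)
    (hg : Continuous g) (M : ℝ) (hM : ∀ x, |g x| ≤ M) :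
    Tendsto (fun n => ∫ x, ksStep g n x ∂G) atTop (𝓝 (∫ x, g x ∂G)) := by
  refine tendsto_integral_of_dominated_convergence (fun _ => M)
    (fun n => (ksStep_measurable g n).aestronglyMeasurable) (integrable_const _) ?_ ?_
  · intro n
    refine Eventually.of_forall fun x => ?_
    rw [ksStep_eq]
    exact hM _
  · exact Eventually.of_forall fun x => ksStep_tendsto g hg x

lemma ks_core (G1 G0 : Measure ℝ) [IsProbabilityMeasure G1] [IsProbabilityMeasure G0]
    (g : ℝ → ℝ) (hg : Continuous g) (M : ℝ) (hM : ∀ x, |g x| ≤ M) (K : ℝ)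
    (hK : ∀ x, |(G1 (Set.Iic x)).toReal - (G0 (Set.Iic x)).toReal| ≤ K)
    (hV : eVariationOn g Set.univ ≠ ⊤) :
    |(∫ x, g x ∂G1) - ∫ x, g x ∂G0| ≤ K * (eVariationOn g Set.univ).toReal := by
  have hK0 : 0 ≤ K := (abs_nonneg _).trans (hK 0)
  refine le_of_tendsto ((ksStep_integral_tendsto G1 g hg M hM).sub
    (ksStep_integral_tendsto G0 g hg M hM)).abs (Eventually.of_forall fun n => ?_)
  rw [ksStep_integral, ksStep_integral, sub_sub_sub_cancel_left, ← Finset.sum_sub_distrib]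
  have hsum : ∑ i ∈ Finset.range (2 * (n + 1) ^ 2), |g (ksGrid n (i + 1)) - g (ksGrid n i)|
      ≤ (eVariationOn g Set.univ).toReal := by
    rw [← ENNReal.ofReal_le_iff_le_toReal hV,
      ENNReal.ofReal_sum_of_nonneg (fun _ _ => abs_nonneg _)]
    refine le_trans (le_of_eq ?_) (eVariationOn.sum_le (f := g) (s := Set.univ)
      (n := 2 * (n + 1) ^ 2) (ksGrid_mono n) (fun _ => Set.mem_univ _))
    refine Finset.sum_congr rfl fun i _ => ?_
    rw [edist_dist, Real.dist_eq]
  refine (Finset.abs_sum_le_sum_abs _ _).trans ?_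
  refine le_trans ?_ (mul_le_mul_of_nonneg_left hsum hK0)
  rw [Finset.mul_sum]
  refine Finset.sum_le_sum fun i _ => ?_
  rw [← mul_sub, abs_mul, mul_comm, abs_sub_comm (G0 _).toReal]
  exact mul_le_mul_of_nonneg_right (hK _) (abs_nonneg _)

lemma ks_ext_nonempty (A : Set ℝ) (hA : IsClosed A) (h : ℝ → ℝ) (hcont : ContinuousOn h A)
    (hbdd : ∃ M : ℝ, ∀ x ∈ A, |h x| ≤ M) : (ksExtensions A h).Nonempty := by
  obtain ⟨M, hM⟩ := hbdd
  obtain ⟨g, hg⟩ := ContinuousMap.exists_restrict_eq hA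
    (⟨A.domRestrict h, hcont.domRestrict⟩ : C(A, ℝ))
  refine ⟨fun x => max (-|M|) (min |M| (g x)), by fun_prop, ⟨|M|, fun x => ?_⟩, fun x hx => ?_⟩
  · rw [abs_le]
    exact ⟨le_max_left _ _, max_le (by linarith [abs_nonneg M]) (min_le_left _ _)⟩
  · have h1 : g x = h x := congrArg (fun f : C(A, ℝ) => f ⟨x, hx⟩) hg
    have h2 := abs_le.1 ((hM x hx).trans (le_abs_self M))
    simp only [h1]
    rw [min_eq_right h2.2, max_eq_right h2.1]

/-- **Kolmogorov–Smirnov bound**: for probability measures `G¹, G⁰` on `ℝ` supported in a closed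
set `A` and `h` continuous and bounded on `A`, the set `H` of continuous bounded extensions of `h`
is nonempty and
`|∫_A h dG¹ − ∫_A h dG⁰| ≤ (sup_x |F₁(x) − F₀(x)|) · inf_{g ∈ H} V(g)`,
where `V(g)` is the total variation of `g` over `ℝ`. -/
theorem kolmogorov_smirnov_bound
    (G1 G0 : Measure ℝ) [IsProbabilityMeasure G1] [IsProbabilityMeasure G0]
    (A : Set ℝ) (hA : IsClosed A)
    (hsupp1 : G1 Aᶜ = 0) (hsupp0 : G0 Aᶜ = 0)
    (h : ℝ → ℝ) (hcont : ContinuousOn h A) (hbdd : ∃ M : ℝ, ∀ x ∈ A, |h x| ≤ M) :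
    (ksExtensions A h).Nonempty ∧
      ENNReal.ofReal |(∫ x in A, h x ∂G1) - ∫ x in A, h x ∂G0| ≤
        ENNReal.ofReal
            (⨆ x : ℝ, |(G1 (Set.Iic x)).toReal - (G0 (Set.Iic x)).toReal|) *
          ⨅ g ∈ ksExtensions A h, eVariationOn g Set.univ := by
  refine ⟨ks_ext_nonempty A hA h hcont hbdd, ?_⟩
  set K := ⨆ x : ℝ, |(G1 (Set.Iic x)).toReal - (G0 (Set.Iic x)).toReal| with hKdef
  have hK : ∀ x, |(G1 (Set.Iic x)).toReal - (G0 (Set.Iic x)).toReal| ≤ K := by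
    refine le_ciSup (f := fun x : ℝ => |(G1 (Set.Iic x)).toReal - (G0 (Set.Iic x)).toReal|) ⟨1, ?_⟩
    rintro _ ⟨x, rfl⟩
    have a1 : (G1 (Set.Iic x)).toReal ≤ 1 := measureReal_le_one
    have a0 : (G0 (Set.Iic x)).toReal ≤ 1 := measureReal_le_one
    have b1 : 0 ≤ (G1 (Set.Iic x)).toReal := ENNReal.toReal_nonneg
    have b0 : 0 ≤ (G0 (Set.Iic x)).toReal := ENNReal.toReal_nonneg
    exact abs_le.2 ⟨by linarith, by linarith⟩
  have hK0 : 0 ≤ K := (abs_nonneg _).trans (hK 0)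
  rcases hK0.eq_or_lt with hz | hpos
  · have : G1 = G0 := by
      refine Measure.ext_of_Iic _ _ fun a => ?_
      have h1 := hK a
      rw [← hz] at h1
      have h2 := sub_eq_zero.1 (abs_nonpos_iff.1 h1)
      exact (ENNReal.toReal_eq_toReal_iff' (measure_ne_top _ _) (measure_ne_top _ _)).1 h2
    rw [this]
    simp
  · have hKne : ENNReal.ofReal K ≠ 0 := by simpa using hpos
    simp only [ENNReal.mul_iInf_of_ne hKne ENNReal.ofReal_ne_top]
    refine le_iInf₂ fun g hg => ?_
    obtain ⟨hgc, ⟨M, hM⟩, hgA⟩ := hg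
    by_cases hV : eVariationOn g Set.univ = ⊤
    · rw [hV, ENNReal.mul_top hKne]
      exact le_top
    have hint : ∀ G : Measure ℝ, G Aᶜ = 0 → ∫ x in A, h x ∂G = ∫ x, g x ∂G := by
      intro G hG
      rw [← setIntegral_congr_fun hA.measurableSet hgA,
        Measure.restrict_eq_self_of_ae_mem (mem_ae_iff.2 hG)]
    rw [hint G1 hsupp1, hint G0 hsupp0]
    conv_rhs => rw [← ENNReal.ofReal_toReal hV]
    rw [← ENNReal.ofReal_mul hK0]
    exact ENNReal.ofReal_le_ofReal (ks_core G1 G0 g hgc M hM K hK hV)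
end

section
/- (Mean difference bound) Let G¹ and G⁰ be probability measures on ℝ^p with finite supports 𝒳¹ and 𝒳⁰ respectively, let r : ℝ^p → ℝ^J be a vector of summary functions, and let h : ℝ^p → ℝ. Suppose that for each σ ∈ {+1, −1} there exist ζ_σ ∈ ℝ^J and nonnegative slack functions ξ_σ¹ : 𝒳¹ → [0,∞) and ξ_σ⁰ : 𝒳⁰ → [0,∞) such that σ·h(x) ≤ σ·(r(x)⋅ζ_σ) + ξ_σ¹(x) for every x ∈ 𝒳¹ and σ·h(x) ≥ σ·(r(x)⋅ζ_σ) − ξ_σ⁰(x) for every x ∈ 𝒳⁰. Let c ∈ ℝ^J be the vector with components c_j = |∫ r_j dG¹ − ∫ r_j dG⁰|, and let |ζ| denote the componentwise absolute value of ζ. Then −|ζ_{−1}|⋅c − Σ_{d∈{0,1}} ∫ ξ_{−1}^d dG^d ≤ ∫ h dG¹ − ∫ h dG⁰ ≤ |ζ₁|⋅c + Σ_{d∈{0,1}} ∫ ξ₁^d dG^d; in particular |∫ h dG¹ − ∫ h dG⁰| ≤ (max(|ζ₁|, |ζ_{−1}|) componentwise)⋅c + Σ_{σ=±1} Σ_{d∈{0,1}}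 ∫ ξ_σ^d dG^d. (In the paper, with h the misspecification function f₀ − l_θ(·,0), ∫ h d(G¹−G⁰) equals the regression bias β − τ.) -/
open MeasureTheory

/-- every real function is integrable for a finitely supported finite measure -/
lemma integrable_of_finite_supp {E : Type*} [MeasurableSpace E] [MeasurableSingletonClass E]
    (G : Measure E) [IsFiniteMeasure G] (X : Set E) (hX : X.Finite) (hs : G Xᶜ = 0)
    (f : E → ℝ) : Integrable f G := by
  have h1 : IntegrableOn f X G := IntegrableOn.of_finite hX
  have h2 : G.restrict X = G := Measure.restrict_eq_self_of_ae_mem (by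
    rw [ae_iff]; exact hs)
  rwa [IntegrableOn, h2] at h1

lemma one_sided {E : Type*} [MeasurableSpace E] [MeasurableSingletonClass E] {J : ℕ}
    (G1 G0 : Measure E) [IsFiniteMeasure G1] [IsFiniteMeasure G0]
    (X1 X0 : Set E) (hX1 : X1.Finite) (hX0 : X0.Finite)
    (hs1 : G1 X1ᶜ = 0) (hs0 : G0 X0ᶜ = 0)
    (r : E → Fin J → ℝ) (h : E → ℝ) (ζ : Fin J → ℝ) (ξ1 ξ0 : E → ℝ)
    (ha : ∀ x ∈ X1, h x ≤ (∑ j, r x j * ζ j) + ξ1 x)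
    (hb : ∀ x ∈ X0, (∑ j, r x j * ζ j) - ξ0 x ≤ h x)
    (c : Fin J → ℝ) (hc : ∀ j, c j = |(∫ x, r x j ∂G1) - ∫ x, r x j ∂G0|) :
    (∫ x, h x ∂G1) - ∫ x, h x ∂G0
      ≤ (∑ j, |ζ j| * c j) + ((∫ x, ξ1 x ∂G1) + ∫ x, ξ0 x ∂G0) := by
  have i1 := integrable_of_finite_supp G1 X1 hX1 hs1
  have i0 := integrable_of_finite_supp G0 X0 hX0 hs0
  have m1 : ∀ᵐ x ∂G1, x ∈ X1 := by rw [ae_iff]; exact hs1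
  have m0 : ∀ᵐ x ∂G0, x ∈ X0 := by rw [ae_iff]; exact hs0
  have e1 : ∫ x, h x ∂G1 ≤ ∫ x, ((∑ j, r x j * ζ j) + ξ1 x) ∂G1 :=
    integral_mono_ae (i1 _) (i1 _) (m1.mono ha)
  have e0 : ∫ x, ((∑ j, r x j * ζ j) - ξ0 x) ∂G0 ≤ ∫ x, h x ∂G0 :=
    integral_mono_ae (i0 _) (i0 _) (m0.mono hb)
  rw [integral_add (i1 _) (i1 _), integral_finsetSum _ (fun j _ => i1 _)] at e1
  rw [integral_sub (i0 _) (i0 _), integral_finsetSum _ (fun j _ => i0 _)] at e0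
  simp only [integral_mul_const] at e1 e0
  have key : (∑ j, (∫ x, r x j ∂G1) * ζ j) - (∑ j, (∫ x, r x j ∂G0) * ζ j)
      ≤ ∑ j, |ζ j| * c j := by
    rw [← Finset.sum_sub_distrib]
    refine Finset.sum_le_sum fun j _ => ?_
    rw [hc j, ← abs_mul, ← sub_mul, mul_comm]
    exact le_abs_self _
  linarith

/-- **Mean difference bound**: for finitely supported probability measures `G¹, G⁰` on `ℝ^p`,
summaries `r`, and (noisy) separating functionals `r(·)⋅ζ_σ` with slacks `ξ_σ^d`,
the difference `∫ h dG¹ − ∫ h dG⁰` is bounded below by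
`−|ζm|⋅c − Σ_d ∫ ξ₋₁^d dG^d` and above by `|ζ1|⋅c + Σ_d ∫ ξ₁^d dG^d`;
in particular its absolute value is at most
`(max(|ζ1|,|ζm|))⋅c + Σ_σ Σ_d ∫ ξ_σ^d dG^d`. -/
theorem mean_difference_bound
    {p J : ℕ} (G1 G0 : Measure (EuclideanSpace ℝ (Fin p)))
    [IsProbabilityMeasure G1] [IsProbabilityMeasure G0]
    (X1 X0 : Set (EuclideanSpace ℝ (Fin p))) (hX1fin : X1.Finite) (hX0fin : X0.Finite)
    (hsupp1 : G1 X1ᶜ = 0) (hsupp0 : G0 X0ᶜ = 0)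
    (r : EuclideanSpace ℝ (Fin p) → Fin J → ℝ) (h : EuclideanSpace ℝ (Fin p) → ℝ)
    (ζ1 ζm : Fin J → ℝ)
    (ξ1X1 ξ1X0 ξmX1 ξmX0 : EuclideanSpace ℝ (Fin p) → ℝ)
    (hxi1X1 : ∀ x ∈ X1, 0 ≤ ξ1X1 x) (hxi1X0 : ∀ x ∈ X0, 0 ≤ ξ1X0 x)
    (hximX1 : ∀ x ∈ X1, 0 ≤ ξmX1 x) (hximX0 : ∀ x ∈ X0, 0 ≤ ξmX0 x)
    -- σ = +1 separation constraints
    (hsep1a : ∀ x ∈ X1, h x ≤ (∑ j, r x j * ζ1 j) + ξ1X1 x)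
    (hsep1b : ∀ x ∈ X0, (∑ j, r x j * ζ1 j) - ξ1X0 x ≤ h x)
    -- σ = −1 separation constraints
    (hsepma : ∀ x ∈ X1, -h x ≤ -(∑ j, r x j * ζm j) + ξmX1 x)
    (hsepmb : ∀ x ∈ X0, -(∑ j, r x j * ζm j) - ξmX0 x ≤ -h x)
    -- componentwise absolute mean differences of the summaries
    (c : Fin J → ℝ)
    (hc : ∀ j, c j = |(∫ x, r x j ∂G1) - ∫ x, r x j ∂G0|) :
    (-(∑ j, |ζm j| * c j) - ((∫ x, ξmX1 x ∂G1) + ∫ x, ξmX0 x ∂G0)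
        ≤ (∫ x, h x ∂G1) - ∫ x, h x ∂G0) ∧
    ((∫ x, h x ∂G1) - ∫ x, h x ∂G0
        ≤ (∑ j, |ζ1 j| * c j) + ((∫ x, ξ1X1 x ∂G1) + ∫ x, ξ1X0 x ∂G0)) ∧
    (|(∫ x, h x ∂G1) - ∫ x, h x ∂G0|
        ≤ (∑ j, max |ζ1 j| |ζm j| * c j)
          + ((∫ x, ξ1X1 x ∂G1) + (∫ x, ξ1X0 x ∂G0)
            + (∫ x, ξmX1 x ∂G1) + ∫ x, ξmX0 x ∂G0)) := by
  have up := one_sided G1 G0 X1 X0 hX1fin hX0fin hsupp1 hsupp0 r h ζ1 ξ1X1 ξ1X0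
    hsep1a hsep1b c hc
  have lo := one_sided G1 G0 X1 X0 hX1fin hX0fin hsupp1 hsupp0 r (fun x => -h x)
    (fun j => -ζm j) ξmX1 ξmX0
    (by simpa only [mul_neg, Finset.sum_neg_distrib] using hsepma)
    (by simpa only [mul_neg, Finset.sum_neg_distrib] using hsepmb) c hc
  simp only [integral_neg, abs_neg] at lo
  have m1 : ∀ᵐ x ∂G1, x ∈ X1 := by rw [ae_iff]; exact hsupp1
  have m0 : ∀ᵐ x ∂G0, x ∈ X0 := by rw [ae_iff]; exact hsupp0
  have n1 : 0 ≤ ∫ x, ξ1X1 x ∂G1 := integral_nonneg_of_ae (m1.mono hxi1X1)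
  have n2 : 0 ≤ ∫ x, ξ1X0 x ∂G0 := integral_nonneg_of_ae (m0.mono hxi1X0)
  have n3 : 0 ≤ ∫ x, ξmX1 x ∂G1 := integral_nonneg_of_ae (m1.mono hximX1)
  have n4 : 0 ≤ ∫ x, ξmX0 x ∂G0 := integral_nonneg_of_ae (m0.mono hximX0)
  have c0 : ∀ j, 0 ≤ c j := fun j => by rw [hc j]; exact abs_nonneg _
  have s1 : ∑ j, |ζ1 j| * c j ≤ ∑ j, max |ζ1 j| |ζm j| * c j :=
    Finset.sum_le_sum fun j _ => mul_le_mul_of_nonneg_right (le_max_left _ _) (c0 j)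
  have s2 : ∑ j, |ζm j| * c j ≤ ∑ j, max |ζ1 j| |ζm j| * c j :=
    Finset.sum_le_sum fun j _ => mul_le_mul_of_nonneg_right (le_max_right _ _) (c0 j)
  refine ⟨by linarith, up, abs_le.mpr ⟨by linarith, by linarith⟩⟩
end

section
/- (Size distortion bounds under local misspecification) In the triangular-array least squares setting, suppose Σ_n^{-1/2} √k_n (θ̂_n − θ_n) converges in distribution to N(0, I_q), let β̂_n and β_n denote the second coordinates of θ̂_n and θ_n, let σ_n² := (Σ_n)_{2,2} (bounded above and below away from 0), and let se_n be positive random variables with √k_n · se_n / σ_n → 1 in probability (e.g. se_n = √((Σ̂_n)_{2,2}/k_n) with the consistent matching-based variance estimator). Fix v > 0 and deterministic reals τ_n with |β_n − τ_n| ≤ v/√k_n, and define the t-statistic t_n := (β̂_n − τ_n)/se_n. Then for every z ∈ ℝ: Φ(z) ≤ liminf_n P[t_n − v/(√k_n · se_n) ≤ z] and limsup_n P[t_n + v/(√k_n · se_n) ≤ z] ≤ Φ(z), where Φ is the standard normal cumulative distribution function. -/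
open MeasureTheory Filter

/-- The standard normal cumulative distribution function `Φ`. -/
noncomputable def stdGaussianCdf (t : ℝ) : ℝ :=
  ((ProbabilityTheory.gaussianReal 0 1) (Set.Iic t)).toReal

open ProbabilityTheory
open scoped Topology

lemma aux_map {q : ℕ} (u : Fin q → ℝ) (hu : u ⬝ᵥ u = 1) :
    (Measure.pi fun _ : Fin q => gaussianReal 0 1).map (fun x => u ⬝ᵥ x) = gaussianReal 0 1 := by
  have hm : Measurable (fun x : Fin q → ℝ => u ⬝ᵥ x) := by
    simp only [dotProduct]; fun_prop
  apply Measure.ext_of_charFun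
  ext t
  have h := charFun_pi (μ := fun _ : Fin q => gaussianReal 0 1) (t := WithLp.toLp 2 (t • u))
  rw [charFun_apply, integral_map (by fun_prop) (by fun_prop)] at h
  rw [charFun_apply, integral_map (by fun_prop) (by fun_prop)]
  refine Eq.trans ?_ (h.trans ?_)
  · congr 1
    ext x
    congr 2
    simp [dotProduct, PiLp.inner_apply, Finset.mul_sum]
    congr 1; ext i; ring
  · simp only [charFun_gaussianReal, ← Complex.exp_sum]
    congr 1
    simp only [dotProduct] at hu
    have : ∑ i, ((t:ℂ) * u i)^2 = t^2 := by
      have : ∑ i, (t * u i)^2 = t^2 := by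
        rw [← mul_one (t^2), ← hu, Finset.mul_sum]
        congr 1; ext i; ring
      exact_mod_cast this
    simp [← Finset.sum_div, this]

lemma aux_clt {q : ℕ} (ν : ℕ → ProbabilityMeasure (Fin q → ℝ)) (γ : ProbabilityMeasure (Fin q → ℝ))
    (hγ : (γ : Measure (Fin q → ℝ)) = Measure.pi fun _ : Fin q => gaussianReal 0 1)
    (h : Tendsto ν atTop (𝓝 γ)) (u : ℕ → Fin q → ℝ) (hu : ∀ n, u n ⬝ᵥ u n = 1) (z : ℝ) :
    Tendsto (fun n => (ν n : Measure _) {x | u n ⬝ᵥ x ≤ z}) atTop (𝓝 (gaussianReal 0 1 (Set.Iic z))) := by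
  rw [tendsto_iff_ultrafilter]
  intro g hg
  have hcomp : IsCompact (Set.Icc (fun _ => -1 : Fin q → ℝ) (fun _ => 1)) := isCompact_Icc
  have hmem : ∀ n, u n ∈ Set.Icc (fun _ => -1 : Fin q → ℝ) (fun _ => 1) := by
    intro n
    have : ∀ i, (u n i)^2 ≤ 1 := by
      intro i
      rw [← hu n, dotProduct, sq]
      exact Finset.single_le_sum (f := fun i => u n i * u n i)
        (fun j _ => mul_self_nonneg _) (Finset.mem_univ i)
    exact ⟨fun i => (abs_le.1 ((sq_le_one_iff_abs_le_one _).1 (this i))).1,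
      fun i => (abs_le.1 ((sq_le_one_iff_abs_le_one _).1 (this i))).2⟩
  obtain ⟨w, -, hw⟩ := hcomp.ultrafilter_le_nhds (g.map u)
    (le_principal_iff.2 (Ultrafilter.mem_map.2 (Filter.univ_mem' hmem)))
  have hw : Tendsto u g (𝓝 w) := hw
  have hdot : Continuous (fun p : (Fin q → ℝ) × (Fin q → ℝ) => p.2 ⬝ᵥ p.1) := by
    simp only [dotProduct]; fun_prop
  have hw1 : w ⬝ᵥ w = 1 := by
    have h1 : Tendsto (fun n => u n ⬝ᵥ u n) g (𝓝 (w ⬝ᵥ w)) :=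
      (hdot.tendsto (w, w)).comp (hw.prodMk_nhds hw)
    simp only [hu] at h1
    exact tendsto_nhds_unique h1 tendsto_const_nhds
  have hp : Tendsto (fun n => (ν n).prod (diracProba (u n))) g (𝓝 (γ.prod (diracProba w))) :=
    (ProbabilityMeasure.continuous_prod.tendsto (γ, diracProba w)).comp
      ((h.mono_left hg).prodMk_nhds ((continuous_diracProba.tendsto w).comp hw))
  have hq := ProbabilityMeasure.tendsto_map_of_tendsto_of_continuous _ _ hp hdot
  have key : ∀ (m : ProbabilityMeasure (Fin q → ℝ)) (y : Fin q → ℝ),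
      (((m.prod (diracProba y)).map hdot.aemeasurable : ProbabilityMeasure ℝ) : Measure ℝ) =
        (m : Measure _).map (fun x => y ⬝ᵥ x) := by
    intro m y
    have hdy : Measurable (fun x : Fin q → ℝ => y ⬝ᵥ x) := by
      simp only [dotProduct]; fun_prop
    have hd : ((diracProba y : ProbabilityMeasure (Fin q → ℝ)) : Measure (Fin q → ℝ)) =
      Measure.dirac y := rfl
    rw [ProbabilityMeasure.toMeasure_map, ProbabilityMeasure.toMeasure_prod, hd, Measure.prod_dirac, Measure.map_map hdot.measurable (by fun_prop)]
    rfl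
  have hlim : (((γ.prod (diracProba w)).map hdot.aemeasurable : ProbabilityMeasure ℝ) : Measure ℝ)
      = gaussianReal 0 1 := by
    rw [key, hγ, aux_map w hw1]
  have := ProbabilityMeasure.tendsto_measure_of_null_frontier_of_tendsto' hq (E := Set.Iic z)
    (by rw [hlim, frontier_Iic]; have := nullSingletonClass_gaussianReal (μ := 0) (v := 1) one_ne_zero; simp)
  rw [hlim] at this
  refine this.congr fun n => ?_
  rw [key, Measure.map_apply (by simp only [dotProduct]; fun_prop) measurableSet_Iic]
  rfl

lemma aux_core {s σ se t ε δ x b c v : ℝ} (hs : 0 < s) (hσ : 0 < σ) (hse : 0 < se)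
    (hr : |s * se / σ - 1| < ε) (hε : ε * |t| ≤ δ) (hb : |b - c| ≤ v / s) :
    (σ⁻¹ * (s * (x - b)) ≤ t - δ → (x - c) / se - v / (s * se) ≤ t) ∧
    ((x - c) / se + v / (s * se) ≤ t → σ⁻¹ * (s * (x - b)) ≤ t + δ) := by
  have h1 : |t * (s * se / σ - 1)| ≤ δ := by
    rw [abs_mul, mul_comm]
    exact (mul_le_mul_of_nonneg_right hr.le (abs_nonneg t)).trans hε
  obtain ⟨h1a, h1b⟩ := abs_le.1 h1
  rw [le_div_iff₀ hs] at hb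
  have hb' : |(b - c) * s| ≤ v := by rwa [abs_mul, abs_of_pos hs]
  obtain ⟨hba, hbb⟩ := abs_le.1 hb'
  have hsse : 0 < s * se := mul_pos hs hse
  have e : t * (s * se / σ - 1) = σ⁻¹ * (t * (s * se)) - t := by
    field_simp
  rw [e] at h1a h1b
  constructor
  · intro h
    have h2 : σ⁻¹ * (s * (x - b)) ≤ σ⁻¹ * (t * (s * se)) := by linarith
    have h3 := le_of_mul_le_mul_left h2 (inv_pos.2 hσ)
    have e2 : (x - c) / se - v / (s * se) = (s * (x - c) - v) / (s * se) := by
      field_simp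
    rw [e2, div_le_iff₀ hsse]
    nlinarith
  · intro h
    have e2 : (x - c) / se + v / (s * se) = (s * (x - c) + v) / (s * se) := by
      field_simp
    rw [e2, div_le_iff₀ hsse] at h
    have h3 : s * (x - b) ≤ t * (s * se) := by nlinarith
    have h2 := mul_le_mul_of_nonneg_left h3 (inv_pos.2 hσ).le
    linarith

lemma aux_left (t : ℝ) (L : ENNReal)
    (h : ∀ δ > 0, gaussianReal 0 1 (Set.Iic (t - δ)) ≤ L) : gaussianReal 0 1 (Set.Iic t) ≤ L := by
  have := nullSingletonClass_gaussianReal (μ := 0) (v := 1) one_ne_zero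
  rw [← measure_congr (Iio_ae_eq_Iic (μ := gaussianReal 0 1) (a := t))]
  have hu : (⋃ n : ℕ, Set.Iic (t - 1 / ((n : ℝ) + 1))) = Set.Iio t := by
    ext x
    simp only [Set.mem_iUnion, Set.mem_Iic, Set.mem_Iio]
    constructor
    · rintro ⟨n, hn⟩
      have : (0 : ℝ) < 1 / ((n : ℝ) + 1) := by positivity
      linarith
    · intro hx
      obtain ⟨n, hn⟩ := exists_nat_one_div_lt (sub_pos.2 hx)
      exact ⟨n, by linarith⟩
  rw [← hu]
  refine le_of_tendsto (tendsto_measure_iUnion_atTop ?_)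
    (Eventually.of_forall fun n => h _ (by positivity))
  intro a b hab
  apply Set.Iic_subset_Iic.2
  have : 1 / ((b : ℝ) + 1) ≤ 1 / ((a : ℝ) + 1) := Nat.one_div_le_one_div hab
  linarith

lemma aux_right (t : ℝ) (L : ENNReal)
    (h : ∀ δ > 0, L ≤ gaussianReal 0 1 (Set.Iic (t + δ))) : L ≤ gaussianReal 0 1 (Set.Iic t) := by
  have hu : (⋂ n : ℕ, Set.Iic (t + 1 / ((n : ℝ) + 1))) = Set.Iic t := by
    ext x
    simp only [Set.mem_iInter, Set.mem_Iic]
    constructor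
    · intro hx
      by_contra! hlt
      obtain ⟨n, hn⟩ := exists_nat_one_div_lt (sub_pos.2 hlt)
      have := hx n
      linarith
    · intro hx n
      have : (0 : ℝ) < 1 / ((n : ℝ) + 1) := by positivity
      linarith
  rw [← hu]
  refine ge_of_tendsto (tendsto_measure_iInter_atTop
    (fun n => measurableSet_Iic.nullMeasurableSet) ?_ ⟨0, measure_ne_top _ _⟩)
    (Eventually.of_forall fun n => h _ (by positivity))
  intro a b hab
  apply Set.Iic_subset_Iic.2
  have : 1 / ((b : ℝ) + 1) ≤ 1 / ((a : ℝ) + 1) := Nat.one_div_le_one_div hab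
  linarith

/-- **Size distortion bounds under local misspecification** (Corollary 5): if
`Σ_n^{-1/2} √k_n (θ̂_n − θ_n)` converges in law to `N(0, I_q)`, `σ_n² = (Σ_n)_{2,2}` is bounded
above and away from zero, `√k_n · se_n / σ_n → 1` in probability, and the null values `τ_n`
satisfy the local bias bound `|β_n − τ_n| ≤ v/√k_n`, then for the t-statistic
`t_n = (β̂_n − τ_n)/se_n` and every `z ∈ ℝ`,
`Φ(z) ≤ liminf P[t_n − v/(√k_n se_n) ≤ z]` and `limsup P[t_n + v/(√k_n se_n) ≤ z] ≤ Φ(z)`. -/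
theorem size_distortion_bounds
    (q : ℕ) (k : ℕ → ℕ) (hk : Tendsto k atTop atTop)
    (Om : ℕ → Type*) [∀ n, MeasurableSpace (Om n)]
    (P : ∀ n, Measure (Om n)) (hP : ∀ n, IsProbabilityMeasure (P n))
    -- estimator, estimand, asymptotic covariance, and its symmetric square root
    (θhat : ∀ n, Om n → Fin q → ℝ) (hθm : ∀ n, Measurable (θhat n))
    (θ : ℕ → Fin q → ℝ)
    (Sigm : ℕ → Matrix (Fin q) (Fin q) ℝ)
    (Sq : ℕ → Matrix (Fin q) (Fin q) ℝ)
    (hSq : ∀ n, (Sq n).IsSymm ∧ (Sq n).PosDef ∧ Sq n * Sq n = Sigm n)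
    -- the index of the second coordinate (the coefficient β on D)
    (i1 : Fin q) (hi1 : (i1 : ℕ) = 1)
    -- weak convergence of `Σ_n^{-1/2} √k_n (θ̂_n − θ_n)` to the standard Gaussian on ℝ^q
    (hweak : ∀ f : (Fin q → ℝ) → ℝ, Continuous f → (∃ C : ℝ, ∀ v, |f v| ≤ C) →
      Tendsto
        (fun n => ∫ ω, f ((Sq n)⁻¹.mulVec fun a =>
          Real.sqrt (k n) * (θhat n ω a - θ n a)) ∂(P n))
        atTop
        (nhds (∫ v, f v ∂(Measure.pi fun _ : Fin q => ProbabilityTheory.gaussianReal 0 1))))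
    -- σ_n² = (Σ_n)_{2,2} bounded above and away from zero
    (σlow σhigh : ℝ) (hσlow : 0 < σlow)
    (hσ : ∀ n, σlow ≤ Sigm n i1 i1 ∧ Sigm n i1 i1 ≤ σhigh)
    -- positive standard errors with `√k_n · se_n / σ_n → 1` in probability
    (se : ∀ n, Om n → ℝ) (hsem : ∀ n, Measurable (se n)) (hsepos : ∀ n ω, 0 < se n ω)
    (hseconv : ∀ ε > (0 : ℝ), Tendsto
      (fun n => P n {ω |
        ε ≤ |Real.sqrt (k n) * se n ω / Real.sqrt (Sigm n i1 i1) - 1|})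
      atTop (nhds 0))
    -- local misspecification: `|β_n − τ_n| ≤ v / √k_n`
    (v : ℝ) (hv : 0 < v) (τ : ℕ → ℝ)
    (hτ : ∀ n, |θ n i1 - τ n| ≤ v / Real.sqrt (k n)) :
    ∀ t : ℝ,
      ENNReal.ofReal (stdGaussianCdf t) ≤
        liminf (fun n => P n {ω |
          (θhat n ω i1 - τ n) / se n ω - v / (Real.sqrt (k n) * se n ω) ≤ t}) atTop ∧
      limsup (fun n => P n {ω |
          (θhat n ω i1 - τ n) / se n ω + v / (Real.sqrt (k n) * se n ω) ≤ t}) atTop ≤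
        ENNReal.ofReal (stdGaussianCdf t) := by
  have hσpos : ∀ n, 0 < Sigm n i1 i1 := fun n => hσlow.trans_le (hσ n).1
  have hσp : ∀ n, 0 < Real.sqrt (Sigm n i1 i1) := fun n => Real.sqrt_pos.2 (hσpos n)
  let X : ∀ n, Om n → Fin q → ℝ := fun n ω => (Sq n)⁻¹.mulVec fun a =>
          Real.sqrt (k n) * (θhat n ω a - θ n a)
  have hXm : ∀ n, Measurable (X n) := by
    intro n
    have hc : Continuous (fun y : Fin q → ℝ => (Sq n)⁻¹.mulVec y) :=
      Continuous.matrix_mulVec continuous_const continuous_id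
    refine hc.measurable.comp (measurable_pi_lambda _ fun a => ?_)
    have := (measurable_pi_apply a).comp (hθm n)
    exact (this.sub_const _).const_mul _
  let ν : ℕ → ProbabilityMeasure (Fin q → ℝ) := fun n =>
    ⟨(P n).map (X n), Measure.isProbabilityMeasure_map (hXm n).aemeasurable⟩
  let γ : ProbabilityMeasure (Fin q → ℝ) :=
    ⟨Measure.pi fun _ : Fin q => gaussianReal 0 1, inferInstance⟩
  have hν : Tendsto ν atTop (𝓝 γ) := by
    rw [ProbabilityMeasure.tendsto_iff_forall_integral_tendsto]
    intro f
    refine (hweak f f.continuous ⟨‖f‖, fun y => f.norm_coe_le_norm y⟩).congr fun n => ?_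
    exact (integral_map (hXm n).aemeasurable f.continuous.aestronglyMeasurable).symm
  let u : ℕ → Fin q → ℝ := fun n => (Real.sqrt (Sigm n i1 i1))⁻¹ • Sq n i1
  have hu : ∀ n, u n ⬝ᵥ u n = 1 := by
    intro n
    obtain ⟨hsym, -, hmul⟩ := hSq n
    have h1 : Sq n i1 ⬝ᵥ Sq n i1 = Sigm n i1 i1 := by
      rw [← hmul, Matrix.mul_apply]
      exact Finset.sum_congr rfl fun j _ => by rw [hsym.apply i1 j]
    simp only [u, smul_dotProduct, dotProduct_smul, h1, smul_eq_mul]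
    nth_rewrite 3 [← Real.mul_self_sqrt (hσpos n).le]
    have := (hσp n).ne'
    field_simp
  have huX : ∀ n ω, u n ⬝ᵥ X n ω =
      (Real.sqrt (Sigm n i1 i1))⁻¹ * (Real.sqrt (k n) * (θhat n ω i1 - θ n i1)) := by
    intro n ω
    simp only [u, smul_dotProduct, smul_eq_mul]
    congr 1
    change (Sq n).mulVec (X n ω) i1 = _
    have hdet : IsUnit (Sq n).det := (hSq n).2.1.det_pos.ne'.isUnit
    simp only [X]
    rw [Matrix.mulVec_mulVec, Matrix.mul_nonsing_inv _ hdet, Matrix.one_mulVec]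
  have hW : ∀ z, Tendsto (fun n => P n {ω | (Real.sqrt (Sigm n i1 i1))⁻¹ *
      (Real.sqrt (k n) * (θhat n ω i1 - θ n i1)) ≤ z}) atTop
      (𝓝 (gaussianReal 0 1 (Set.Iic z))) := by
    intro z
    refine (aux_clt ν γ rfl hν u hu z).congr fun n => ?_
    change ((P n).map (X n)) _ = _
    have hdu : Measurable (fun x : Fin q → ℝ => u n ⬝ᵥ x) := by
      simp only [dotProduct]; fun_prop
    have hms : MeasurableSet {x : Fin q → ℝ | u n ⬝ᵥ x ≤ z} :=
      measurableSet_le hdu measurable_const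
    rw [Measure.map_apply (hXm n) hms]
    simp only [Set.preimage_ofPred_eq, huX]
  intro t
  have hΦ : ENNReal.ofReal (stdGaussianCdf t) = gaussianReal 0 1 (Set.Iic t) :=
    ENNReal.ofReal_toReal (measure_ne_top _ _)
  rw [hΦ]
  have hkpos : ∀ᶠ n in atTop, 0 < Real.sqrt (k n) := by
    filter_upwards [hk.eventually_gt_atTop 0] with n hn
    exact Real.sqrt_pos.2 (by exact_mod_cast hn)
  have hε : ∀ δ > (0 : ℝ), 0 < δ / (|t| + 1) ∧ δ / (|t| + 1) * |t| ≤ δ := by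
    intro δ hδ
    have ht := abs_nonneg t
    refine ⟨by positivity, ?_⟩
    rw [div_mul_eq_mul_div, div_le_iff₀ (by positivity)]
    nlinarith
  constructor
  · refine aux_left t _ fun δ hδ => ?_
    obtain ⟨hε0, hε1⟩ := hε δ hδ
    have hlim := ENNReal.Tendsto.sub (hW (t - δ)) (hseconv _ hε0) (Or.inr ENNReal.zero_ne_top)
    rw [tsub_zero] at hlim
    rw [← hlim.liminf_eq]
    refine liminf_le_liminf ?_
    filter_upwards [hkpos] with n hn
    rw [tsub_le_iff_right]
    refine (measure_mono ?_).trans (measure_union_le _ _)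
    intro ω hω
    by_cases hB : δ / (|t| + 1) ≤ |Real.sqrt (k n) * se n ω / Real.sqrt (Sigm n i1 i1) - 1|
    · exact Or.inr hB
    · exact Or.inl ((aux_core hn (hσp n) (hsepos n ω) (not_le.1 hB) hε1 (hτ n)).1 hω)
  · refine aux_right t _ fun δ hδ => ?_
    obtain ⟨hε0, hε1⟩ := hε δ hδ
    have hlim := (hW (t + δ)).add (hseconv _ hε0)
    rw [add_zero] at hlim
    rw [← hlim.limsup_eq]
    refine limsup_le_limsup ?_
    filter_upwards [hkpos] with n hn
    refine (measure_mono ?_).trans (measure_union_le _ _)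
    intro ω hω
    by_cases hB : δ / (|t| + 1) ≤ |Real.sqrt (k n) * se n ω / Real.sqrt (Sigm n i1 i1) - 1|
    · exact Or.inr hB
    · exact Or.inl ((aux_core hn (hσp n) (hsepos n ω) (not_le.1 hB) hε1 (hτ n)).2 hω)
end

section
/- (Bias representation with interaction terms) Let (Ω, 𝒜, P) carry Y : Ω → ℝ, D : Ω → {0,1}, X : Ω → ℝ^p. Assume Y = l(X, D) + ε where l : ℝ^p × {0,1} → ℝ is measurable, l(X,D) and ε are integrable, E[ε] = 0, E[D·ε] = 0, and 0 < P[D=1] < 1. Assume further that l(·,0) and l(·,1) are integrable with respect to both G¹ and G⁰, and let f₀ be a version of E[Y | X=·, D=0] integrable with respect to G⁰ and G¹, with τ := E[Y | D=1] − ∫ f₀ dG¹. Then E[l(X,1) − l(X,0) | D=1] − τ = ∫ (f₀(x) − l(x,0)) d(G¹ − G⁰)(x). -/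
open MeasureTheory

theorem aux_integral_cond_law {Ω : Type*} [MeasurableSpace Ω] (P : Measure Ω) {E : Type*}
    [MeasurableSpace E] (X : Ω → E) (hXm : Measurable X) (A : Set Ω) (G : Measure E)
    (hG : ∀ B : Set E, MeasurableSet B → G B = P ({ω | X ω ∈ B} ∩ A) / P A)
    (g : E → ℝ) (hg : Measurable g) :
    ∫ x, g x ∂G = (∫ ω in A, g (X ω) ∂P) / (P A).toReal := by
  have h : G = (P A)⁻¹ • (P.restrict A).map X := by
    ext B hB
    rw [hG B hB, Measure.smul_apply, Measure.map_apply hXm hB,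
      Measure.restrict_apply (hXm hB), smul_eq_mul, ENNReal.div_eq_inv_mul]
    rfl
  rw [h, integral_smul_measure, integral_map hXm.aemeasurable hg.aestronglyMeasurable,
    ENNReal.toReal_inv, smul_eq_mul, div_eq_inv_mul]

/-- **Bias representation with interaction terms** (Proposition 5): if `Y = l(X,D) + ε` with
`E[ε] = 0`, `E[D ε] = 0` and `0 < P[D=1] < 1`, then
`E[l(X,1) − l(X,0) | D=1] − τ = ∫ (f₀(x) − l(x,0)) d(G¹ − G⁰)(x)`. -/
theorem bias_representation_interactions
    {Ω : Type*} [MeasurableSpace Ω] (P : Measure Ω) [IsProbabilityMeasure P]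
    {p : ℕ}
    (Y : Ω → ℝ) (D : Ω → ℝ) (X : Ω → EuclideanSpace ℝ (Fin p))
    (hYm : Measurable Y) (hDm : Measurable D) (hXm : Measurable X)
    (hD01 : ∀ ω, D ω = 0 ∨ D ω = 1)
    -- the (possibly interacted) regression function l : ℝ^p × {0,1} → ℝ, measurable
    (l : EuclideanSpace ℝ (Fin p) → ℝ → ℝ)
    (hl0m : Measurable (fun x => l x 0)) (hl1m : Measurable (fun x => l x 1))
    -- Y = l(X,D) + ε with l(X,D), ε integrable, E[ε] = 0 and E[Dε] = 0
    (eps : Ω → ℝ) (heps : ∀ ω, eps ω = Y ω - l (X ω) (D ω))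
    (hlint : Integrable (fun ω => l (X ω) (D ω)) P)
    (hepsint : Integrable eps P)
    (hepsmean : ∫ ω, eps ω ∂P = 0)
    (hepsorth : ∫ ω, D ω * eps ω ∂P = 0)
    -- 0 < P[D = 1] < 1
    (hD1pos : 0 < P {ω | D ω = 1}) (hD1lt : P {ω | D ω = 1} < 1)
    -- conditional laws of X given D = d
    (G0 G1 : Measure (EuclideanSpace ℝ (Fin p)))
    (hG0 : ∀ B : Set (EuclideanSpace ℝ (Fin p)), MeasurableSet B →
      G0 B = P ({ω | X ω ∈ B} ∩ {ω | D ω = 0}) / P {ω | D ω = 0})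
    (hG1 : ∀ B : Set (EuclideanSpace ℝ (Fin p)), MeasurableSet B →
      G1 B = P ({ω | X ω ∈ B} ∩ {ω | D ω = 1}) / P {ω | D ω = 1})
    -- l(·,0), l(·,1) are integrable with respect to both G¹ and G⁰
    (hl00 : Integrable (fun x => l x 0) G0) (hl01 : Integrable (fun x => l x 0) G1)
    (hl10 : Integrable (fun x => l x 1) G0) (hl11 : Integrable (fun x => l x 1) G1)
    -- f₀ is a version of E[Y | X = ·, D = 0]
    (f0 : EuclideanSpace ℝ (Fin p) → ℝ) (hf0m : Measurable f0)
    (hf0i0 : Integrable f0 G0) (hf0i1 : Integrable f0 G1)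
    (hf0 : ∀ B : Set (EuclideanSpace ℝ (Fin p)), MeasurableSet B →
      ∫ x in B, f0 x ∂G0 =
        (∫ ω in {ω | X ω ∈ B} ∩ {ω | D ω = 0}, Y ω ∂P) / (P {ω | D ω = 0}).toReal)
    -- τ := E[Y | D = 1] − ∫ f₀ dG¹
    (τ : ℝ)
    (hτ : τ = (∫ ω in {ω | D ω = 1}, Y ω ∂P) / (P {ω | D ω = 1}).toReal - ∫ x, f0 x ∂G1) :
    (∫ ω in {ω | D ω = 1}, (l (X ω) 1 - l (X ω) 0) ∂P) / (P {ω | D ω = 1}).toReal - τ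
      = (∫ x, (f0 x - l x 0) ∂G1) - ∫ x, (f0 x - l x 0) ∂G0 := by
  have hA1 : MeasurableSet {ω | D ω = 1} := hDm (measurableSet_singleton 1)
  have hA0 : MeasurableSet {ω | D ω = 0} := hDm (measurableSet_singleton 0)
  have hc : {ω | D ω = 1}ᶜ = {ω | D ω = 0} := by
    ext ω
    rcases hD01 ω with h | h <;> simp [h]
  have e1 : ∫ ω in {ω | D ω = 1}, eps ω ∂P = 0 := by
    rw [← integral_indicator hA1, ← hepsorth]
    congr 1
    ext ω
    rcases hD01 ω with h | h <;> simp [h, Set.indicator]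
  have e0 : ∫ ω in {ω | D ω = 0}, eps ω ∂P = 0 := by
    have := integral_add_compl hA1 hepsint
    rw [hc] at this
    linarith
  have key : ∀ d : ℝ, MeasurableSet {ω | D ω = d} → ∫ ω in {ω | D ω = d}, eps ω ∂P = 0 →
      ∫ ω in {ω | D ω = d}, Y ω ∂P = ∫ ω in {ω | D ω = d}, l (X ω) d ∂P := by
    intro d hd he
    have h1 : ∫ ω in {ω | D ω = d}, l (X ω) d ∂P = ∫ ω in {ω | D ω = d}, l (X ω) (D ω) ∂P := by
      apply setIntegral_congr_fun hd
      intro ω hω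
      have hω' : D ω = d := hω
      simp only [hω']
    have h2 : ∫ ω in {ω | D ω = d}, Y ω ∂P
        = ∫ ω in {ω | D ω = d}, (l (X ω) (D ω) + eps ω) ∂P := by
      congr 1
      ext ω
      rw [heps]
      ring
    rw [h2, integral_add hlint.integrableOn hepsint.integrableOn, he, h1, add_zero]
  have y1 := key 1 hA1 e1
  have y0 := key 0 hA0 e0
  have f := hf0 Set.univ MeasurableSet.univ
  simp only [Set.mem_univ, Set.setOf_true, Set.univ_inter, Measure.restrict_univ] at f
  rw [y0, ← aux_integral_cond_law P X hXm _ G0 hG0 (fun x => l x 0) hl0m] at f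
  rw [y1, ← aux_integral_cond_law P X hXm _ G1 hG1 (fun x => l x 1) hl1m] at hτ
  rw [← aux_integral_cond_law P X hXm _ G1 hG1 (fun x => l x 1 - l x 0) (hl1m.sub hl0m),
    integral_sub hl11 hl01, integral_sub hf0i1 hl01, integral_sub hf0i0 hl00, hτ, f]
  ring
end

section
/- (Average nearest-neighbor distance vanishes for bounded configurations) Fix q ∈ ℕ, constants K > 0 and Dm > 0, and a metric ν on ℝ^q satisfying ν(w, w') ≤ K·‖w − w'‖ for all w, w' (Euclidean domination). Then for every ε > 0 there exists N ∈ ℕ such that: for every finite index set S with |S| ≥ N and every family (w_i)_{i ∈ S} of points of ℝ^q with ‖w_i − w_j‖ ≤ Dm for all i, j ∈ S, if l(i) is any minimizer over j ∈ S \ {i} of ν(w_i, w_j), then |S|^{-1} Σ_{i ∈ S} ν(w_i, w_{l(i)}) ≤ ε. In other words, the average ν-distance to the nearest neighbor tends to zero, uniformly over configurations of uniformly bounded diameter, as the number of points tends to infinity. -/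
/-- **Average nearest-neighbor distance vanishes for bounded configurations** (Lemma 3):
for a metric `ν` on `ℝ^q` dominated by the Euclidean norm (`ν ≤ K‖·‖`), and for every `ε > 0`,
there is `N` such that for any finite family of at least `N` points of Euclidean diameter at
most `Dm`, the average `ν`-distance of each point to its nearest neighbor is at most `ε`. -/
theorem average_nearest_neighbor_distance_vanishes
    (q : ℕ) (K Dm : ℝ) (hK : 0 < K) (hDm : 0 < Dm)
    (ν : EuclideanSpace ℝ (Fin q) → EuclideanSpace ℝ (Fin q) → ℝ)
    (hν0 : ∀ w, ν w w = 0) (hνnn : ∀ w w', 0 ≤ ν w w')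
    (hνsymm : ∀ w w', ν w w' = ν w' w)
    (hνtri : ∀ w u w', ν w w' ≤ ν w u + ν u w')
    (hdom : ∀ w w', ν w w' ≤ K * ‖w - w'‖) :
    ∀ ε > (0 : ℝ), ∃ N : ℕ, ∀ (ι : Type) (S : Finset ι), N ≤ S.card →
      ∀ w : ι → EuclideanSpace ℝ (Fin q),
        (∀ i ∈ S, ∀ j ∈ S, ‖w i - w j‖ ≤ Dm) →
        ∀ l : ι → ι,
          (∀ i ∈ S, l i ∈ S ∧ l i ≠ i ∧
            ∀ j ∈ S, j ≠ i → ν (w i) (w (l i)) ≤ ν (w i) (w j)) →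
          (S.card : ℝ)⁻¹ * ∑ i ∈ S, ν (w i) (w (l i)) ≤ ε := by
  classical
  intro ε hε
  have hδ : 0 < ε / (4 * K) := by positivity
  obtain ⟨t, htf, ht⟩ := Metric.totallyBounded_iff.1
    (isCompact_closedBall (0 : EuclideanSpace ℝ (Fin q)) Dm).totallyBounded (ε / (4 * K)) hδ
  obtain ⟨N, hN⟩ := exists_nat_ge (2 * (htf.toFinset.card * (K * Dm)) / ε)
  refine ⟨N + 1, ?_⟩
  intro ι S hS w hw l hl
  have hSpos : 0 < S.card := by omega
  obtain ⟨i0, hi0⟩ := Finset.card_pos.1 hSpos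
  have hc : ∀ i ∈ S, ∃ y ∈ t, dist (w i - w i0) y < ε / (4 * K) := by
    intro i hi
    have h1 : w i - w i0 ∈ Metric.closedBall (0 : EuclideanSpace ℝ (Fin q)) Dm := by
      simpa using hw i hi i0 hi0
    have h2 := ht h1
    simpa using h2
  choose! c hct hcd using hc
  set B := S.filter (fun i => ε / 2 < ν (w i) (w (l i))) with hB
  have hBcard : B.card ≤ htf.toFinset.card := by
    apply Finset.card_le_card_of_injOn c
    · intro i hi
      have hi' : i ∈ B := hi
      simpa using hct i (Finset.mem_filter.1 hi').1
    · intro i hi j hj hij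
      have hi' : i ∈ B := hi
      have hj' : j ∈ B := hj
      obtain ⟨hiS, hiν⟩ := Finset.mem_filter.1 hi'
      obtain ⟨hjS, -⟩ := Finset.mem_filter.1 hj'
      by_contra hne
      have h1 := (hl i hiS).2.2 j hjS (Ne.symm hne)
      have h2 := hdom (w i) (w j)
      have h3 := hcd i hiS
      have h4 := hcd j hjS
      rw [← hij] at h4
      have h5 := dist_triangle_right (w i - w i0) (w j - w i0) (c i)
      rw [dist_sub_right, dist_eq_norm] at h5
      have h6 : K * ‖w i - w j‖ ≤ K * (ε / (4 * K) + ε / (4 * K)) := by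
        apply mul_le_mul_of_nonneg_left _ hK.le
        linarith
      have h7 : K * (ε / (4 * K) + ε / (4 * K)) = ε / 2 := by
        field_simp
        norm_num
      linarith
  have hsum : ∑ i ∈ S, ν (w i) (w (l i)) ≤
      ∑ i ∈ S, (ε / 2 + if ε / 2 < ν (w i) (w (l i)) then K * Dm else 0) := by
    apply Finset.sum_le_sum
    intro i hi
    split_ifs with h
    · have h1 := hdom (w i) (w (l i))
      have h2 := mul_le_mul_of_nonneg_left (hw i hi (l i) (hl i hi).1) hK.le
      linarith
    · linarith
  rw [Finset.sum_add_distrib, ← Finset.sum_filter, Finset.sum_const, Finset.sum_const,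
    nsmul_eq_mul, nsmul_eq_mul, ← hB] at hsum
  have hSr : (0 : ℝ) < S.card := by exact_mod_cast hSpos
  have hNS : (N : ℝ) ≤ S.card := by exact_mod_cast (by omega : N ≤ S.card)
  have hBr : (B.card : ℝ) * (K * Dm) ≤ htf.toFinset.card * (K * Dm) := by
    apply mul_le_mul_of_nonneg_right _ (by positivity)
    exact_mod_cast hBcard
  rw [div_le_iff₀ hε] at hN
  have h8 : (N : ℝ) * ε ≤ S.card * ε := mul_le_mul_of_nonneg_right hNS hε.le
  rw [inv_mul_le_iff₀ hSr]
  linarith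
end
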